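/- Let H ⊆ binom([n],3) be a 2-resilient 3-graph with matching number 2, and let u,v ∈ [n]. Then the number of edges of H meeting {u,v}, i.e. |{T ∈ H : T ∩ {u,v} ≠ ∅}|, is at most 36. -/

import Mathlib

/-- The matching number of a hypergraph: the largest size of a set of
pairwise disjoint edges. -/
noncomputable def matchingNumber (H : Finset (Finset ℕ)) : ℕ :=
  sSup {m | ∃ M : Finset (Finset ℕ), M ⊆ H ∧ M.card = m ∧
    (M : Set (Finset ℕ)).PairwiseDisjoint id}

/-- A hypergraph is `t`-resilient if deleting any set of at most `t`
vertices does not decrease its matching number. -/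
def Resilient (t : ℕ) (H : Finset (Finset ℕ)) : Prop :=
  ∀ T : Finset ℕ, T.card ≤ t →
    matchingNumber (H.filter fun F => Disjoint F T) = matchingNumber H

/-- `S 0, …, S (r-1)` form a pseudo sunflower with center `C`:
the `S i` are distinct, `C` is a proper subset of one of them, and the
sets `S i \ C` are pairwise disjoint. -/
def IsPseudoSunflower {r : ℕ} (S : Fin r → Finset ℕ) (C : Finset ℕ) : Prop :=
  Function.Injective S ∧ (∃ i, C ⊂ S i) ∧
    ∀ i j, i ≠ j → Disjoint (S i \ C) (S j \ C)

/-- The covering (transversal) number of a hypergraph. -/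
noncomputable def coverNumber (H : Finset (Finset ℕ)) : ℕ :=
  sInf {m | ∃ Y : Finset ℕ, Y.card = m ∧ ∀ F ∈ H, (F ∩ Y).Nonempty}

structure Sd (A : Finset ℕ) (P Q : ℕ → Finset ℕ) (t bu bv : ℕ → ℕ) (pc qc : ℕ) : Prop where
  cross : ∀ a ∈ A, ∀ b ∈ A, a ≠ b → ∀ z ∈ P a, ∀ w ∈ Q b, z = w ∨ z = b ∨ w = a
  sP : ∀ a ∈ A, ∀ b ∈ A, a ∈ P b → b ∈ P a
  sQ : ∀ a ∈ A, ∀ b ∈ A, a ∈ Q b → b ∈ Q a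
  iP : ∀ a ∈ A, a ∉ P a
  iQ : ∀ a ∈ A, a ∉ Q a
  t1 : ∀ a ∈ A, t a ≤ 1
  bu3 : ∀ a ∈ A, bu a ≤ 3
  bv3 : ∀ a ∈ A, bv a ≤ 3
  dP : ∀ a ∈ A, t a + (P a).card + bu a ≤ 6
  dQ : ∀ a ∈ A, t a + (Q a).card + bv a ≤ 6
  lP : ∀ a ∈ A, 4 ≤ (P a).card → (P a).card = 4 ∧ t a = 0 ∧ bu a ≤ 2 ∧ bv a ≤ 2
  lQ : ∀ a ∈ A, 4 ≤ (Q a).card → (Q a).card = 4 ∧ t a = 0 ∧ bu a ≤ 2 ∧ bv a ≤ 2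
  cP : ∀ a b c, a ≠ b → a ≠ c → b ≠ c → A = {a, b, c} →
    pc ≤ (P a).card + (P b \ {a}).card + (P c \ {a, b}).card
  cQ : ∀ a b c, a ≠ b → a ≠ c → b ≠ c → A = {a, b, c} →
    qc ≤ (Q a).card + (Q b \ {a}).card + (Q c \ {a, b}).card
  vP : ∀ a ∈ A, (P a).card = 3 → t a = 1 → bu a = 2 → bv a = 3 → Disjoint (P a) A →
    ∀ b ∈ A, b ≠ a → bv b ≤ 2 ∧ (P b).card ≤ 2
  vQ : ∀ a ∈ A, (Q a).card = 3 → t a = 1 → bv a = 2 → bu a = 3 → Disjoint (Q a) A →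
    ∀ b ∈ A, b ≠ a → bu b ≤ 2 ∧ (Q b).card ≤ 2

theorem Sd.swap {A P Q t bu bv pc qc} (h : Sd A P Q t bu bv pc qc) : Sd A Q P t bv bu qc pc where
  cross := fun a ha b hb hab z hz w hw => by
    rcases h.cross b hb a ha hab.symm w hw z hz with h | h | h
    · exact Or.inl h.symm
    · exact Or.inr (Or.inr h)
    · exact Or.inr (Or.inl h)
  sP := h.sQ
  sQ := h.sP
  iP := h.iQ
  iQ := h.iP
  t1 := h.t1
  bu3 := h.bv3
  bv3 := h.bu3
  dP := h.dQ
  dQ := h.dP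
  lP := fun a ha h4 => by
    obtain ⟨h1, h2, h3, h5⟩ := h.lQ a ha h4; exact ⟨h1, h2, h5, h3⟩
  lQ := fun a ha h4 => by
    obtain ⟨h1, h2, h3, h5⟩ := h.lP a ha h4; exact ⟨h1, h2, h5, h3⟩
  cP := h.cQ
  cQ := h.cP
  vP := h.vQ
  vQ := h.vP

theorem card_sdiff_one (S : Finset ℕ) (a : ℕ) :
    (S \ {a}).card + (if a ∈ S then 1 else 0) = S.card := by
  split_ifs with h
  · rw [Finset.sdiff_singleton_eq_erase, Finset.card_erase_of_mem h]
    have := Finset.card_pos.2 ⟨a, h⟩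
    omega
  · rw [Finset.sdiff_singleton_eq_erase, Finset.erase_eq_of_notMem h]; rfl

theorem card_sdiff_two (S : Finset ℕ) (a b : ℕ) (hab : a ≠ b) :
    (S \ {a, b}).card + (if a ∈ S then 1 else 0) + (if b ∈ S then 1 else 0) = S.card := by
  have h1 := card_sdiff_one S a
  have h2 := card_sdiff_one (S \ {a}) b
  have h3 : (S \ {a}) \ {b} = S \ {a, b} := by
    ext x; simp; tauto
  rw [h3] at h2
  have h4 : b ∈ S \ {a} ↔ b ∈ S := by
    simp; intro _ h; exact hab h.symm
  simp only [h4] at h2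
  omega

/-- case where `Q` is empty -/
theorem Sd.caseE {A P Q t bu bv pc qc} (h : Sd A P Q t bu bv pc qc) {a b c : ℕ}
    (hab : a ≠ b) (hac : a ≠ c) (hbc : b ≠ c) (hA : A = {a, b, c})
    (hQ : ∀ x ∈ A, Q x = ∅) :
    2 * (t a + t b + t c) + 2 * (pc + qc) + (bu a + bu b + bu c) + (bv a + bv b + bv c) ≤ 36 := by
  have ha : a ∈ A := by simp [hA]
  have hb : b ∈ A := by simp [hA]
  have hc : c ∈ A := by simp [hA]
  have hq := h.cQ a b c hab hac hbc hA
  simp only [hQ a ha, hQ b hb, hQ c hc] at hq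
  simp at hq
  have hp := h.cP a b c hab hac hbc hA
  have e1 := card_sdiff_one (P b) a
  have e2 := card_sdiff_two (P c) a b hab
  have f : ∀ x ∈ A, 2 * t x + 2 * (P x).card + bu x + bv x ≤ 13 ∧
      (12 < 2 * t x + 2 * (P x).card + bu x + bv x → (P x).card = 3 ∧ t x = 1 ∧ bu x = 2 ∧ bv x = 3) := by
    intro x hx
    have h1 := h.t1 x hx
    have h2 := h.bu3 x hx
    have h3 := h.bv3 x hx
    have h4 := h.dP x hx
    have h5 := h.lP x hx
    by_cases h6 : 4 ≤ (P x).card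
    · have := h5 h6
      omega
    · omega
  have V : ∀ x ∈ A, Disjoint (P x) A → 2 * t x + 2 * (P x).card + bu x + bv x ≤ 12 ∨
      ∀ y ∈ A, y ≠ x → 2 * t y + 2 * (P y).card + bu y + bv y ≤ 11 := by
    intro x hx hd
    by_cases h12 : 2 * t x + 2 * (P x).card + bu x + bv x ≤ 12
    · exact Or.inl h12
    · right
      intro y hy hyx
      obtain ⟨g1, g2, g3, g4⟩ := (f x hx).2 (by omega)
      have := h.vP x hx g1 g2 g3 g4 hd y hy hyx
      have h1 := h.t1 y hy
      have h2 := h.bu3 y hy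
      omega
  have dis : ∀ x y z : ℕ, A = {x, y, z} → x ∉ P x → y ∉ P x → z ∉ P x → Disjoint (P x) A := by
    intro x y z hA h1 h2 h3
    rw [Finset.disjoint_right, hA]
    intro w hw
    simp at hw
    rcases hw with rfl | rfl | rfl <;> assumption
  have ia := h.iP a ha
  have ib := h.iP b hb
  have ic := h.iP c hc
  have s1 : a ∈ P b ↔ b ∈ P a := ⟨h.sP a ha b hb, h.sP b hb a ha⟩
  have s2 : a ∈ P c ↔ c ∈ P a := ⟨h.sP a ha c hc, h.sP c hc a ha⟩
  have s3 : b ∈ P c ↔ c ∈ P b := ⟨h.sP b hb c hc, h.sP c hc b hb⟩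
  have fa := (f a ha).1
  have fb := (f b hb).1
  have fc := (f c hc).1
  have Va : b ∉ P a → c ∉ P a → 2 * t a + 2 * (P a).card + bu a + bv a ≤ 12 ∨
      2 * t b + 2 * (P b).card + bu b + bv b ≤ 11 ∧ 2 * t c + 2 * (P c).card + bu c + bv c ≤ 11 := by
    intro h1 h2
    rcases V a ha (dis a b c hA ia h1 h2) with h | h
    · exact Or.inl h
    · exact Or.inr ⟨h b hb hab.symm, h c hc hac.symm⟩
  have Vb : b ∉ P a → c ∉ P b → 2 * t b + 2 * (P b).card + bu b + bv b ≤ 12 ∨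
      2 * t a + 2 * (P a).card + bu a + bv a ≤ 11 ∧ 2 * t c + 2 * (P c).card + bu c + bv c ≤ 11 := by
    intro h1 h2
    rcases V b hb (dis b a c (by rw [hA]; ext x; simp; clear * -; tauto) ib (fun h => h1 (s1.1 h)) h2) with h | h
    · exact Or.inl h
    · exact Or.inr ⟨h a ha hab, h c hc hbc.symm⟩
  have Vc : c ∉ P a → c ∉ P b → 2 * t c + 2 * (P c).card + bu c + bv c ≤ 12 ∨
      2 * t a + 2 * (P a).card + bu a + bv a ≤ 11 ∧ 2 * t b + 2 * (P b).card + bu b + bv b ≤ 11 := by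
    intro h1 h2
    rcases V c hc (dis c a b (by rw [hA]; ext x; simp; clear * -; tauto) ic (fun h => h1 (s2.1 h))
      (fun h => h2 (s3.1 h))) with h | h
    · exact Or.inl h
    · exact Or.inr ⟨h a ha hac, h b hb hbc⟩
  simp only [s1, s2, s3] at e1 e2
  have key : (2 * t a + 2 * (P a).card + bu a + bv a) + (2 * t b + 2 * (P b).card + bu b + bv b)
      + (2 * t c + 2 * (P c).card + bu c + bv c) ≤ 36 + 2 * ((if b ∈ P a then 1 else 0) +
      (if c ∈ P a then 1 else 0) + (if c ∈ P b then 1 else 0)) := by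
    clear hp hq e1 e2
    generalize 2 * t a + 2 * (P a).card + bu a + bv a = Fa at *
    generalize 2 * t b + 2 * (P b).card + bu b + bv b = Fb at *
    generalize 2 * t c + 2 * (P c).card + bu c + bv c = Fc at *
    by_cases k1 : b ∈ P a <;> by_cases k2 : c ∈ P a <;> by_cases k3 : c ∈ P b <;>
      simp only [k1, k2, k3, if_true, if_false, not_true, not_false_iff, false_imp_iff,
        true_imp_iff] at Va Vb Vc ⊢ <;> omega
  clear Va Vb Vc fa fb fc V f
  omega

theorem card_le_one' (S : Finset ℕ) (y : ℕ) (h : ∀ z ∈ S, z = y) : S.card ≤ 1 := by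
  have : S ⊆ {y} := fun z hz => by simp [h z hz]
  simpa using Finset.card_le_card this

theorem card_le_two' (S : Finset ℕ) (y z : ℕ) (h : ∀ w ∈ S, w = y ∨ w = z) : S.card ≤ 2 := by
  have : S ⊆ {y, z} := fun w hz => by simp [h w hz]
  exact (Finset.card_le_card this).trans Finset.card_le_two

theorem card_eq_zero' (S : Finset ℕ) (h : ∀ w ∈ S, False) : S.card = 0 := by
  rw [Finset.card_eq_zero]
  exact Finset.eq_empty_of_forall_notMem h

/-- if `P a` has at least three elements then `Q` is a star at `a`. -/
theorem Sd.star {A P Q t bu bv pc qc} (h : Sd A P Q t bu bv pc qc) {a b : ℕ}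
    (ha : a ∈ A) (hb : b ∈ A) (hab : a ≠ b) (h3 : 3 ≤ (P a).card) : ∀ w ∈ Q b, w = a := by
  intro w hw
  by_contra hwa
  have := card_le_two' (P a) w b (fun z hz => by
    rcases h.cross a ha b hb hab z hz w hw with h | h | h
    · exact Or.inl h
    · exact Or.inr h
    · exact absurd h hwa)
  omega

/-- case with large degree -/
theorem Sd.caseL {A P Q t bu bv pc qc} (h : Sd A P Q t bu bv pc qc) {a b c : ℕ}
    (hab : a ≠ b) (hac : a ≠ c) (hbc : b ≠ c) (hA : A = {a, b, c})
    (hQ : ∃ x ∈ A, (Q x).Nonempty) (h3 : 3 ≤ (P a).card) :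
    2 * (t a + t b + t c) + 2 * (pc + qc) + (bu a + bu b + bu c) + (bv a + bv b + bv c) ≤ 36 := by
  wlog hw : (P c).card ≤ (P b).card generalizing b c
  · have := this hac hab hbc.symm (by rw [hA]; ext x; simp; clear * -; tauto) (by omega)
    omega
  have ha : a ∈ A := by simp [hA]
  have hb : b ∈ A := by simp [hA]
  have hc : c ∈ A := by simp [hA]
  have Qb := h.star ha hb hab h3
  have Qc := h.star ha hc hac h3
  have hq := h.cQ a b c hab hac hbc hA
  have z1 : (Q b \ {a}).card = 0 := card_eq_zero' _ (fun w hw => by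
    simp at hw; exact hw.2 (Qb w hw.1))
  have z2 : (Q c \ {a, b}).card = 0 := card_eq_zero' _ (fun w hw => by
    simp at hw; exact hw.2.1 (Qc w hw.1))
  have hp := h.cP a b c hab hac hbc hA
  have Qa : (Q a).Nonempty := by
    obtain ⟨x, hx, w, hw⟩ := hQ
    by_cases hxa : x = a
    · exact ⟨w, hxa ▸ hw⟩
    · have : w = a := h.star ha hx (Ne.symm hxa) h3 w hw
      exact ⟨x, h.sQ a ha x hx (this ▸ hw)⟩
  have Qa1 := Finset.card_pos.2 Qa
  have f : ∀ x ∈ A, 3 ≤ (P x).card → 2 * t x + 2 * (P x).card + bu x + bv x ≤ 13 := by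
    intro x hx hx3
    have h1 := h.t1 x hx
    have h2 := h.bu3 x hx
    have h3 := h.bv3 x hx
    have h4 := h.dP x hx
    have h5 := h.lP x hx
    by_cases h6 : 4 ≤ (P x).card
    · have := h5 h6
      omega
    · omega
  have fa := f a ha h3
  have g : ∀ x ∈ A, 2 * t x + bu x + bv x ≤ 8 := by
    intro x hx
    have h1 := h.t1 x hx
    have h2 := h.bu3 x hx
    have h3 := h.bv3 x hx
    omega
  have gb := g b hb
  have gc := g c hc
  by_cases hb3 : 3 ≤ (P b).card
  · have Q1 := h.star hb ha hab.symm hb3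
    have q1 := card_le_one' (Q a) b Q1
    have hbQ : b ∈ Q a := by
      obtain ⟨w, hw⟩ := Qa
      exact (Q1 w hw) ▸ hw
    have z3 : (P c \ {a, b}).card = 0 := card_eq_zero' _ (fun w hw => by
      simp at hw
      rcases h.cross c hc a ha hac.symm w hw.1 b hbQ with h | h | h
      · exact hw.2.2 h
      · exact hw.2.1 h
      · exact hbc h)
    have z4 : (P b \ {a}).card ≤ (P b).card := Finset.card_le_card Finset.sdiff_subset
    have fb := f b hb hb3
    omega
  · by_cases hq3 : 3 ≤ (Q a).card
    · have Pb := h.swap.star ha hb hab hq3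
      have Pc := h.swap.star ha hc hac hq3
      have z3 : (P b \ {a}).card = 0 := card_eq_zero' _ (fun w hw => by
        simp at hw; exact hw.2 (Pb w hw.1))
      have z4 : (P c \ {a, b}).card = 0 := card_eq_zero' _ (fun w hw => by
        simp at hw; exact hw.2.1 (Pc w hw.1))
      have h1 := h.t1 a ha
      have h2 := h.bu3 a ha
      have h3 := h.bv3 a ha
      have h4 := h.dP a ha
      have h4' := h.dQ a ha
      have h5 := h.lP a ha
      have h5' := h.lQ a ha
      by_cases h6 : 4 ≤ (P a).card
      · have := h5 h6
        by_cases h7 : 4 ≤ (Q a).card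
        · have := h5' h7
          omega
        · omega
      · by_cases h7 : 4 ≤ (Q a).card
        · have := h5' h7
          omega
        · omega
    · suffices hs : (P b \ {a}).card + (P c \ {a, b}).card + (Q a).card ≤ 3 by omega
      have cb : ∀ z ∈ P b \ {a}, ∀ d ∈ Q a, z = d ∨ d = b := by
        intro z hz d hd
        simp at hz
        rcases h.cross b hb a ha hab.symm z hz.1 d hd with h | h | h
        · exact Or.inl h
        · exact absurd h hz.2
        · exact Or.inr h
      have cc : ∀ z ∈ P c \ {a, b}, ∀ d ∈ Q a, z = d ∨ d = c := by
        intro z hz d hd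
        simp at hz
        rcases h.cross c hc a ha hac.symm z hz.1 d hd with h | h | h
        · exact Or.inl h
        · exact absurd h hz.2.1
        · exact Or.inr h
      have u1 := card_sdiff_one (P b) a
      have u2 := card_sdiff_two (P c) a b hab
      have s3 : b ∈ P c ↔ c ∈ P b := ⟨h.sP b hb c hc, h.sP c hc b hb⟩
      by_cases hq2 : (Q a).card = 2
      · obtain ⟨d, e, hde, hQd⟩ := Finset.card_eq_two.1 hq2
        rw [hQd] at cb cc
        simp only [Finset.mem_insert, Finset.mem_singleton, forall_eq_or_imp, forall_eq] at cb cc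
        have m1 : (P b \ {a}).card ≤ 1 := by
          rw [Finset.card_le_one]
          intro x hx y hy
          have := cb x hx
          have := cb y hy
          grind
        have m2 : (P c \ {a, b}).card ≤ 1 := by
          rw [Finset.card_le_one]
          intro x hx y hy
          have := cc x hx
          have := cc y hy
          grind
        by_contra hcon
        obtain ⟨x, hx⟩ : (P b \ {a}).Nonempty := Finset.card_pos.1 (by omega)
        obtain ⟨y, hy⟩ : (P c \ {a, b}).Nonempty := Finset.card_pos.1 (by omega)
        have h1 := cb x hx
        have h2 := cc y hy
        simp at hx hy
        have := h.iP b hb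
        have := h.iP c hc
        grind
      · have hq1 : (Q a).card = 1 := by omega
        obtain ⟨d, hQd⟩ := Finset.card_eq_one.1 hq1
        rw [hQd] at cb cc
        simp only [Finset.mem_singleton, forall_eq] at cb cc
        by_cases hdb : d = b
        · have z4 : (P c \ {a, b}).card = 0 := card_eq_zero' _ (fun w hw => by
            have := cc w hw
            simp at hw
            grind)
          have : (P b \ {a}).card ≤ (P b).card := Finset.card_le_card Finset.sdiff_subset
          omega
        · have m1 : (P b \ {a}).card ≤ 1 := card_le_one' _ d (fun z hz => by
            have := cb z hz; tauto)
          by_cases hdc : d = c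
          · by_cases hcb : c ∈ P b
            · rw [if_pos (s3.2 hcb)] at u2
              omega
            · have : (P b \ {a}).card = 0 := card_eq_zero' _ (fun w hw => by
                have := cb w hw
                simp at hw
                grind)
              omega
          · have m2 : (P c \ {a, b}).card ≤ 1 := card_le_one' _ d (fun z hz => by
              have := cc z hz; tauto)
            omega

/-- small degrees, `P` large -/
theorem Sd.caseS {A P Q t bu bv pc qc} (h : Sd A P Q t bu bv pc qc) {a b c : ℕ}
    (hab : a ≠ b) (hac : a ≠ c) (hbc : b ≠ c) (hA : A = {a, b, c})
    (hP2 : ∀ x ∈ A, (P x).card ≤ 2) (hQ2 : ∀ x ∈ A, (Q x).card ≤ 2)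
    (hQ : (Q a).Nonempty) (hP4 : 4 ≤ pc) : pc + qc ≤ 6 := by
  have ha : a ∈ A := by simp [hA]
  have hb : b ∈ A := by simp [hA]
  have hc : c ∈ A := by simp [hA]
  by_cases hAA : ∀ x ∈ A, Q x ⊆ A
  · obtain ⟨d, hd⟩ := hQ
    wlog hdb : d = b generalizing b c
    · have hdA := hAA a ha hd
      have hdc : d = c := by
        have := h.iQ a ha
        rw [hA] at hdA
        simp at hdA
        grind
      exact this hac hab hbc.symm (by rw [hA]; ext x; simp; clear * -; tauto) hc hb hdc
    subst hdb
    have hp := h.cP a d c hab hac hbc hA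
    have hq := h.cQ a d c hab hac hbc hA
    have z1 : (P c \ {a, d}).card = 0 := card_eq_zero' _ (fun w hw => by
      simp at hw
      have := h.cross c hc a ha hac.symm w hw.1 d hd
      grind)
    have z2 : (P d \ {a}).card ≤ (P d).card := Finset.card_le_card Finset.sdiff_subset
    have p1 := hP2 a ha
    have p2 := hP2 d hb
    have q1 := hQ2 a ha
    have z3 : (Q c \ {a, d}).card = 0 := card_eq_zero' _ (fun w hw => by
      simp at hw
      have h1 := hAA c hc hw.1
      have := h.iQ c hc
      rw [hA] at h1
      simp at h1
      grind)
    have z4 : (Q d \ {a}).card ≤ 1 := card_le_one' _ c (fun w hw => by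
      simp at hw
      have h1 := hAA d hb hw.1
      have := h.iQ d hb
      rw [hA] at h1
      simp at h1
      grind)
    by_contra hcon
    have hcQ : c ∈ Q d := by
      obtain ⟨w, hw⟩ : (Q d \ {a}).Nonempty := Finset.card_pos.1 (by omega)
      simp at hw
      have h1 := hAA d hb hw.1
      have := h.iQ d hb
      rw [hA] at h1
      simp at h1
      grind
    have hcQa : c ∈ Q a := by
      obtain ⟨w, hw⟩ : (Q a \ {d}).Nonempty := Finset.card_pos.1 (by
        have := card_sdiff_one (Q a) d
        rw [if_pos hd] at this
        omega)
      simp at hw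
      have h1 := hAA a ha hw.1
      have := h.iQ a ha
      rw [hA] at h1
      simp at h1
      grind
    have : (P d \ {a}).card ≤ 1 := card_le_one' _ c (fun w hw => by
      simp at hw
      have := h.cross d hb a ha hab.symm w hw.1 c hcQa
      grind)
    omega
  · push Not at hAA
    obtain ⟨x, hx, hxx⟩ := hAA
    obtain ⟨y, hy, hyA⟩ := Finset.not_subset.1 hxx
    clear hQ
    obtain ⟨p, q, hxp, hxq, hpq, hA'⟩ : ∃ p q, x ≠ p ∧ x ≠ q ∧ p ≠ q ∧ A = {x, p, q} := by
      have hx' := hx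
      rw [hA] at hx'
      simp at hx'
      rcases hx' with rfl | rfl | rfl
      · exact ⟨b, c, hab, hac, hbc, hA⟩
      · exact ⟨a, c, hab.symm, hbc, hac, by rw [hA]; ext x; simp; clear * -; tauto⟩
      · exact ⟨a, b, hac.symm, hbc.symm, hab, by rw [hA]; ext x; simp; clear * -; tauto⟩
    have hp : p ∈ A := by simp [hA']
    have hq : q ∈ A := by simp [hA']
    have nyx : y ≠ x := fun h => hyA (h ▸ hx)
    have nyp : y ≠ p := fun h => hyA (h ▸ hp)
    have nyq : y ≠ q := fun h => hyA (h ▸ hq)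
    have hpc := h.cP x p q hxp hxq hpq hA'
    have hqc := h.cQ x p q hxp hxq hpq hA'
    have Pp : ∀ w ∈ P p \ {x}, w = y := fun w hw => by
      simp at hw
      have := h.cross p hp x hx hxp.symm w hw.1 y hy
      grind
    have Pq : ∀ w ∈ P q \ {x, p}, w = y := fun w hw => by
      simp at hw
      have := h.cross q hq x hx hxq.symm w hw.1 y hy
      grind
    have m1 := card_le_one' _ y Pp
    have m2 := card_le_one' _ y Pq
    have m3 := hP2 x hx
    have yp : y ∈ P p := by
      obtain ⟨w, hw⟩ : (P p \ {x}).Nonempty := Finset.card_pos.1 (by omega)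
      have := Pp w hw
      simp at hw
      grind
    have yq : y ∈ P q := by
      obtain ⟨w, hw⟩ : (P q \ {x, p}).Nonempty := Finset.card_pos.1 (by omega)
      have := Pq w hw
      simp at hw
      grind
    obtain ⟨d, e, hde, hPx⟩ := Finset.card_eq_two.1 (show (P x).card = 2 by omega)
    have q1 : (Q x).card ≤ 1 := card_le_one' _ y (fun w hw => by
      have h1 := h.cross p hp x hx hxp.symm y yp w hw
      have h2 := h.cross q hq x hx hxq.symm y yq w hw
      grind)
    have Qp : ∀ w ∈ Q p, (w = y ∨ w = q) ∧ (d = w ∨ d = p ∨ w = x) ∧ (e = w ∨ e = p ∨ w = x) := by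
      intro w hw
      have h1 := h.cross q hq p hp hpq.symm y yq w hw
      have h2 := h.cross x hx p hp hxp d (by simp [hPx]) w hw
      have h3 := h.cross x hx p hp hxp e (by simp [hPx]) w hw
      grind
    have Qq : ∀ w ∈ Q q \ {x, p}, w = y ∧ (d = w ∨ d = q ∨ w = x) ∧ (e = w ∨ e = q ∨ w = x) := by
      intro w hw
      simp at hw
      have h1 := h.cross p hp q hq hpq y yp w hw.1
      have h2 := h.cross x hx q hq hxq d (by simp [hPx]) w hw.1
      have h3 := h.cross x hx q hq hxq e (by simp [hPx]) w hw.1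
      grind
    have r1 : (Q p \ {x}).card ≤ 1 := by
      rw [Finset.card_le_one]
      intro s hs s' hs'
      simp at hs hs'
      have := Qp s hs.1
      have := Qp s' hs'.1
      grind
    have r2 := card_le_one' _ y (fun w hw => (Qq w hw).1)
    by_contra hcon
    obtain ⟨s, hs⟩ : (Q p \ {x}).Nonempty := Finset.card_pos.1 (by omega)
    obtain ⟨s', hs'⟩ : (Q q \ {x, p}).Nonempty := Finset.card_pos.1 (by omega)
    have h1 := Qq s' hs'
    simp at hs
    have h2 := Qp s hs.1
    grind

theorem Sd.main {A P Q t bu bv pc qc} (h : Sd A P Q t bu bv pc qc) {a b c : ℕ}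
    (hab : a ≠ b) (hac : a ≠ c) (hbc : b ≠ c) (hA : A = {a, b, c}) :
    2 * (t a + t b + t c) + 2 * (pc + qc) + (bu a + bu b + bu c) + (bv a + bv b + bv c) ≤ 36 := by
  have sw : ∀ {P Q : ℕ → Finset ℕ} {bu bv : ℕ → ℕ} {pc qc : ℕ} (h : Sd A P Q t bu bv pc qc)
      (hQ : ∃ x ∈ A, (Q x).Nonempty) (hL : ∃ x ∈ A, 3 ≤ (P x).card),
      2 * (t a + t b + t c) + 2 * (pc + qc) + (bu a + bu b + bu c) + (bv a + bv b + bv c) ≤ 36 := by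
    intro P Q bu bv pc qc h hQ hL
    obtain ⟨x, hx, hx3⟩ := hL
    have hx' := hx
    rw [hA] at hx'
    simp at hx'
    rcases hx' with rfl | rfl | rfl
    · exact h.caseL hab hac hbc hA hQ hx3
    · have := h.caseL hab.symm hbc hac (by rw [hA]; ext x; simp; clear * -; tauto) hQ hx3
      omega
    · have := h.caseL hac.symm hbc.symm hab (by rw [hA]; ext x; simp; clear * -; tauto) hQ hx3
      omega
  have sm : ∀ {P Q : ℕ → Finset ℕ} {bu bv : ℕ → ℕ} {pc qc : ℕ} (h : Sd A P Q t bu bv pc qc)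
      (hQ : ∃ x ∈ A, (Q x).Nonempty) (hP2 : ∀ x ∈ A, (P x).card ≤ 2)
      (hQ2 : ∀ x ∈ A, (Q x).card ≤ 2) (h4 : 4 ≤ pc), pc + qc ≤ 6 := by
    intro P Q bu bv pc qc h hQ hP2 hQ2 h4
    obtain ⟨x, hx, hx3⟩ := hQ
    have hx' := hx
    rw [hA] at hx'
    simp at hx'
    rcases hx' with rfl | rfl | rfl
    · exact h.caseS hab hac hbc hA hP2 hQ2 hx3 h4
    · exact h.caseS hab.symm hbc hac (by rw [hA]; ext x; simp; clear * -; tauto) hP2 hQ2 hx3 h4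
    · exact h.caseS hac.symm hbc.symm hab (by rw [hA]; ext x; simp; clear * -; tauto) hP2 hQ2 hx3 h4
  by_cases hQ : ∃ x ∈ A, (Q x).Nonempty
  · by_cases hP : ∃ x ∈ A, (P x).Nonempty
    · by_cases hL : ∃ x ∈ A, 3 ≤ (P x).card
      · exact sw h hQ hL
      · by_cases hL' : ∃ x ∈ A, 3 ≤ (Q x).card
        · have := sw h.swap hP hL'
          omega
        · push Not at hL hL'
          have hL1 : ∀ x ∈ A, (P x).card ≤ 2 := fun x hx => by have := hL x hx; omega
          have hL2 : ∀ x ∈ A, (Q x).card ≤ 2 := fun x hx => by have := hL' x hx; omega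
          have s6 : pc + qc ≤ 6 := by
            by_cases h4 : 4 ≤ pc
            · exact sm h hQ hL1 hL2 h4
            · by_cases h4' : 4 ≤ qc
              · have := sm h.swap hP hL2 hL1 h4'
                omega
              · omega
          have ha : a ∈ A := by simp [hA]
          have hb : b ∈ A := by simp [hA]
          have hc : c ∈ A := by simp [hA]
          have := h.t1 a ha
          have := h.t1 b hb
          have := h.t1 c hc
          have := h.bu3 a ha
          have := h.bu3 b hb
          have := h.bu3 c hc
          have := h.bv3 a ha
          have := h.bv3 b hb
          have := h.bv3 c hc
          omega
    · push Not at hP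
      have := h.swap.caseE hab hac hbc hA (fun x hx => by simpa using hP x hx)
      omega
  · push Not at hQ
    exact h.caseE hab hac hbc hA (fun x hx => by simpa using hQ x hx)

def lk (H : Finset (Finset ℕ)) (x y : ℕ) : Finset ℕ :=
  (H.biUnion id).filter (fun z => ({x, y, z} : Finset ℕ) ∈ H)

theorem mem_lk {H : Finset (Finset ℕ)} {x y z : ℕ} :
    z ∈ lk H x y ↔ ({x, y, z} : Finset ℕ) ∈ H := by
  unfold lk
  simp only [Finset.mem_filter, Finset.mem_biUnion, id, and_iff_right_iff_imp]
  intro h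
  exact ⟨_, h, by simp⟩

structure Cfg (H : Finset (Finset ℕ)) (u v : ℕ) (A B : Finset ℕ) : Prop where
  h3 : ∀ T ∈ H, T.card = 3
  no3 : ∀ R ∈ H, ∀ S ∈ H, ∀ T ∈ H, Disjoint R S → Disjoint R T → Disjoint S T → False
  res : ∀ x y, ∃ C ∈ H, ∃ D ∈ H, Disjoint C D ∧ x ∉ C ∧ y ∉ C ∧ x ∉ D ∧ y ∉ D
  hA : A ∈ H
  hB : B ∈ H
  dAB : Disjoint A B
  uA : u ∉ A
  uB : u ∉ B
  vA : v ∉ A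
  vB : v ∉ B
  uv : u ≠ v

theorem Cfg.swap {H u v A B} (h : Cfg H u v A B) : Cfg H v u A B :=
  ⟨h.h3, h.no3, h.res, h.hA, h.hB, h.dAB, h.vA, h.vB, h.uA, h.uB, h.uv.symm⟩

theorem Cfg.swapAB {H u v A B} (h : Cfg H u v A B) : Cfg H u v B A :=
  ⟨h.h3, h.no3, h.res, h.hB, h.hA, h.dAB.symm, h.uB, h.uA, h.vB, h.vA, h.uv⟩

theorem disj3 {x y z : ℕ} {S : Finset ℕ} :
    Disjoint ({x, y, z} : Finset ℕ) S ↔ x ∉ S ∧ y ∉ S ∧ z ∉ S := by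
  simp [Finset.disjoint_left]

theorem Cfg.ne {H u v A B} (h : Cfg H u v A B) {x y z : ℕ} (hx : ({x, y, z} : Finset ℕ) ∈ H) :
    x ≠ y ∧ x ≠ z ∧ y ≠ z := by
  have := h.h3 _ hx
  refine ⟨?_, ?_, ?_⟩ <;> rintro rfl
  · have h2 : ({x, x, z} : Finset ℕ).card ≤ 2 := by
      simp only [Finset.insert_idem]; exact Finset.card_le_two
    omega
  · have h2 : ({x, y, x} : Finset ℕ).card ≤ 2 := by
      rw [show ({x, y, x} : Finset ℕ) = {x, y} by ext; simp; tauto]; exact Finset.card_le_two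
    omega
  · have h2 : ({x, y, y} : Finset ℕ).card ≤ 2 := by
      simp only [Finset.pair_eq_singleton]; exact Finset.card_le_two
    omega

theorem exists_third {T : Finset ℕ} (hT : T.card = 3) {x y : ℕ} (hx : x ∈ T) (hy : y ∈ T)
    (hxy : x ≠ y) : ∃ z, T = {x, y, z} := by
  have h1 : ((T.erase x).erase y).card = 1 := by
    rw [Finset.card_erase_of_mem (by simp [hy, hxy.symm]), Finset.card_erase_of_mem hx, hT]
  obtain ⟨z, hz⟩ := Finset.card_eq_one.1 h1
  refine ⟨z, ?_⟩
  rw [← hz, Finset.insert_erase (by simp [hy, hxy.symm]), Finset.insert_erase hx]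

def PP (H : Finset (Finset ℕ)) (u v : ℕ) (B : Finset ℕ) (a : ℕ) : Finset ℕ :=
  lk H u a \ insert v B

theorem mem_PP {H : Finset (Finset ℕ)} {u v a z : ℕ} {B : Finset ℕ} :
    z ∈ PP H u v B a ↔ ({u, a, z} : Finset ℕ) ∈ H ∧ z ≠ v ∧ z ∉ B := by
  simp [PP, mem_lk]

def tt (H : Finset (Finset ℕ)) (u v : ℕ) (a : ℕ) : ℕ :=
  if ({u, v, a} : Finset ℕ) ∈ H then 1 else 0

theorem perm12 (x y z : ℕ) : ({x, y, z} : Finset ℕ) = {y, x, z} := by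
  ext w; simp; tauto

theorem perm23 (x y z : ℕ) : ({x, y, z} : Finset ℕ) = {x, z, y} := by
  ext w; simp; tauto

theorem tt_comm (H : Finset (Finset ℕ)) (u v : ℕ) : tt H u v = tt H v u := by
  funext a; simp only [tt, perm12 u v a]

/-- the link of `{u,a}` splits -/
theorem Cfg.split {H u v A B} (h : Cfg H u v A B) (a : ℕ) :
    tt H u v a + (PP H u v B a).card + (lk H u a ∩ B).card = (lk H u a).card := by
  have e1 : (lk H u a ∩ insert v B).card = tt H u v a + (lk H u a ∩ B).card := by
    unfold tt
    split_ifs with hv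
    · rw [Finset.inter_insert_of_mem (mem_lk.2 (by rwa [perm23])),
        Finset.card_insert_of_notMem (by simp [h.vB])]
      omega
    · rw [Finset.inter_insert_of_notMem (fun h => hv (by rw [perm23]; exact mem_lk.1 h))]
      omega
  have e2 := Finset.card_sdiff_add_card_inter (lk H u a) (insert v B)
  unfold PP
  omega

theorem Cfg.lk_sub {H u v A B} (h : Cfg H u v A B) {a : ℕ} {C D : Finset ℕ} (hC : C ∈ H)
    (hD : D ∈ H) (hCD : Disjoint C D) (h1 : u ∉ C) (h2 : a ∉ C) (h3 : u ∉ D) (h4 : a ∉ D) :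
    lk H u a ⊆ C ∪ D := by
  intro z hz
  rw [mem_lk] at hz
  by_contra hcon
  simp at hcon
  exact h.no3 _ hz _ hC _ hD (disj3.2 ⟨h1, h2, hcon.1⟩) (disj3.2 ⟨h3, h4, hcon.2⟩) hCD

theorem Cfg.card_union {H u v A B} (h : Cfg H u v A B) {C D : Finset ℕ} (hC : C ∈ H)
    (hD : D ∈ H) (hCD : Disjoint C D) : (C ∪ D).card = 6 := by
  rw [Finset.card_union_of_disjoint hCD, h.h3 C hC, h.h3 D hD]

theorem Cfg.codeg {H u v A B} (h : Cfg H u v A B) (a : ℕ) : (lk H u a).card ≤ 6 := by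
  obtain ⟨C, hC, D, hD, hCD, h1, h2, h3, h4⟩ := h.res u a
  rw [← h.card_union hC hD hCD]
  exact Finset.card_le_card (h.lk_sub hC hD hCD h1 h2 h3 h4)

/-- an edge avoiding `u`, `a`, `B` contains all of `P a` -/
theorem Cfg.cov {H u v A B} (h : Cfg H u v A B) {a : ℕ} (ha : a ∈ A) {E : Finset ℕ} (hE : E ∈ H)
    (h1 : u ∉ E) (h2 : a ∉ E) (hEB : Disjoint E B) : PP H u v B a ⊆ E := by
  intro z hz
  rw [mem_PP] at hz
  by_contra hcon
  exact h.no3 _ hz.1 _ hE _ h.hB (disj3.2 ⟨h1, h2, hcon⟩)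
    (disj3.2 ⟨h.uB, Finset.disjoint_left.1 h.dAB ha, hz.2.2⟩) hEB

theorem card_inter_le_two {S B : Finset ℕ} (hB : B.card = 3) {b : ℕ} (hb : b ∈ B) (hS : b ∉ S) :
    (S ∩ B).card ≤ 2 := by
  have : S ∩ B ⊆ B.erase b := by
    intro x hx
    simp at hx
    simp only [Finset.mem_erase]
    exact ⟨fun h => hS (h ▸ hx.1), hx.2⟩
  have := Finset.card_le_card this
  rw [Finset.card_erase_of_mem hb] at this
  omega

theorem Cfg.l1 {H u v A B} (h : Cfg H u v A B) {a : ℕ} (ha : a ∈ A)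
    (h4 : 4 ≤ (PP H u v B a).card) : (PP H u v B a).card = 4 ∧ tt H u v a = 0 ∧
      (lk H u a ∩ B).card ≤ 2 ∧ (lk H v a ∩ B).card ≤ 2 := by
  obtain ⟨C, hC, D, hD, hCD, uC, aC, uD, aD⟩ := h.res u a
  have hB3 := h.h3 B h.hB
  have h6 := h.card_union hC hD hCD
  have hsub := h.lk_sub hC hD hCD uC aC uD aD
  have meet : ∀ E ∈ H, u ∉ E → a ∉ E → (E ∩ B).Nonempty := by
    intro E hE h1 h2
    by_contra hcon
    rw [Finset.not_nonempty_iff_eq_empty, ← Finset.disjoint_iff_inter_eq_empty] at hcon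
    have := Finset.card_le_card (h.cov ha hE h1 h2 hcon)
    have := h.h3 E hE
    omega
  have c1 := Finset.card_pos.2 (meet C hC uC aC)
  have c2 := Finset.card_pos.2 (meet D hD uD aD)
  have c3 : ((C ∪ D) ∩ B).card = (C ∩ B).card + (D ∩ B).card := by
    rw [Finset.union_inter_distrib_right, Finset.card_union_of_disjoint]
    exact Finset.disjoint_of_subset_left Finset.inter_subset_left
      (Finset.disjoint_of_subset_right Finset.inter_subset_left hCD)
  have c4 := Finset.card_sdiff_add_card_inter (C ∪ D) B
  have sub : PP H u v B a ⊆ (C ∪ D) \ B := by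
    intro z hz
    rw [mem_PP] at hz
    rw [Finset.mem_sdiff]
    exact ⟨hsub (mem_lk.2 hz.1), hz.2.2⟩
  have c5 := Finset.card_le_card sub
  have eq : PP H u v B a = (C ∪ D) \ B := Finset.eq_of_subset_of_card_le sub (by omega)
  have hv : v ∉ C ∪ D := by
    intro hv
    have : v ∈ PP H u v B a := by rw [eq, Finset.mem_sdiff]; exact ⟨hv, h.vB⟩
    exact (mem_PP.1 this).2.1 rfl
  obtain ⟨b, hb, hbn⟩ : ∃ b ∈ B, b ∉ C ∪ D := by
    by_contra hcon
    push Not at hcon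
    have : (C ∪ D) ∩ B = B := Finset.inter_eq_right.2 hcon
    rw [this] at c3 c4
    omega
  have hbn' := hbn
  have hv' := hv
  simp at hbn hv
  refine ⟨by omega, ?_, ?_, ?_⟩
  · unfold tt
    rw [if_neg]
    intro hT
    rw [perm23] at hT
    exact hv' (hsub (mem_lk.2 hT))
  · exact card_inter_le_two hB3 hb (fun hl => hbn' (hsub hl))
  · refine card_inter_le_two hB3 hb (fun hl => ?_)
    rw [mem_lk] at hl
    exact h.no3 _ hl _ hC _ hD (disj3.2 ⟨hv.1, aC, hbn.1⟩) (disj3.2 ⟨hv.2, aD, hbn.2⟩) hCD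

theorem Cfg.l2aux {H u v A B} (h : Cfg H u v A B) {a : ℕ} (ha : a ∈ A)
    (hp : (PP H u v B a).card = 3) (hbu : (lk H u a ∩ B).card = 2) (ht : tt H u v a = 1)
    (hbv : (lk H v a ∩ B).card = 3) (hd : Disjoint (PP H u v B a) A)
    {C D : Finset ℕ} (hC : C ∈ H) (hD : D ∈ H) (hCD : Disjoint C D) (uC : u ∉ C) (aC : a ∉ C)
    (uD : u ∉ D) (aD : a ∉ D) (vC : v ∈ C) :
    ∀ b ∈ A, b ≠ a → (lk H v b ∩ B).card ≤ 2 ∧ (PP H u v B b).card ≤ 2 := by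
  have hB3 := h.h3 B h.hB
  have hC3 := h.h3 C hC
  have hD3 := h.h3 D hD
  have h6 := h.card_union hC hD hCD
  have hsub := h.lk_sub hC hD hCD uC aC uD aD
  have hs := h.split a
  have eq : lk H u a = C ∪ D := Finset.eq_of_subset_of_card_le hsub (by omega)
  have vD : v ∉ D := Finset.disjoint_left.1 hCD vC
  have hPC : ¬ PP H u v B a ⊆ C := by
    intro hsb
    have h1 : insert v (PP H u v B a) ⊆ C := Finset.insert_subset vC hsb
    have h2 := Finset.card_le_card h1
    rw [Finset.card_insert_of_notMem (fun hv => (mem_PP.1 hv).2.1 rfl)] at h2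
    omega
  have hDsub : ∀ z ∈ D, z ∉ B → z ∈ PP H u v B a := by
    intro z hz hzB
    rw [mem_PP]
    refine ⟨mem_lk.1 (eq ▸ Finset.mem_union_right _ hz), ?_, hzB⟩
    rintro rfl
    exact vD hz
  have hDA : Disjoint D A := by
    rw [Finset.disjoint_left]
    intro z hz hzA
    exact Finset.disjoint_left.1 hd (hDsub z hz (Finset.disjoint_left.1 h.dAB hzA)) hzA
  have hDB : ¬ Disjoint D B := fun hdb => h.no3 _ h.hA _ h.hB _ hD h.dAB hDA.symm hdb.symm
  have hCB : ¬ Disjoint C B := fun hcb => hPC (h.cov ha hC uC aC hcb)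
  have c3 : ((C ∪ D) ∩ B).card = (C ∩ B).card + (D ∩ B).card := by
    rw [Finset.union_inter_distrib_right, Finset.card_union_of_disjoint]
    exact Finset.disjoint_of_subset_left Finset.inter_subset_left
      (Finset.disjoint_of_subset_right Finset.inter_subset_left hCD)
  rw [← eq, hbu] at c3
  have c1 : 0 < (C ∩ B).card := by
    rw [Finset.card_pos]
    rw [Finset.disjoint_iff_inter_eq_empty] at hCB
    exact Finset.nonempty_iff_ne_empty.2 hCB
  have c2 : 0 < (D ∩ B).card := by
    rw [Finset.card_pos]
    rw [Finset.disjoint_iff_inter_eq_empty] at hDB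
    exact Finset.nonempty_iff_ne_empty.2 hDB
  have c4 := Finset.card_sdiff_add_card_inter D B
  obtain ⟨x, hx, hxD⟩ : ∃ x ∈ PP H u v B a, x ∉ D := by
    by_contra hcon
    push Not at hcon
    have : PP H u v B a ⊆ D \ B := fun z hz => Finset.mem_sdiff.2 ⟨hcon z hz, (mem_PP.1 hz).2.2⟩
    have := Finset.card_le_card this
    omega
  obtain ⟨b, hb, hbn⟩ : ∃ b ∈ B, b ∉ C ∪ D := by
    by_contra hcon
    push Not at hcon
    have : (C ∪ D) ∩ B = B := Finset.inter_eq_right.2 hcon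
    rw [← eq] at this
    rw [this] at hbu
    omega
  have hbD : b ∉ D := fun h => hbn (Finset.mem_union_right _ h)
  have hvab : ({v, a, b} : Finset ℕ) ∈ H := by
    have : lk H v a ∩ B = B :=
      Finset.eq_of_subset_of_card_le Finset.inter_subset_right (by omega)
    have hb' := hb
    rw [← this] at hb'
    exact mem_lk.1 (Finset.mem_inter.1 hb').1
  have hxp := mem_PP.1 hx
  have hxA := Finset.disjoint_left.1 hd hx
  intro c hc hca
  have hcD : c ∉ D := Finset.disjoint_right.1 hDA hc
  have hcB : c ∉ B := Finset.disjoint_left.1 h.dAB hc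
  have haB : a ∉ B := Finset.disjoint_left.1 h.dAB ha
  have huv := h.uv
  have huA := h.uA
  have hvA := h.vA
  have huB := h.uB
  have hvB := h.vB
  constructor
  · refine card_inter_le_two hB3 hb (fun hl => ?_)
    rw [mem_lk] at hl
    refine h.no3 _ hl _ hxp.1 _ hD ?_ (disj3.2 ⟨vD, hcD, hbD⟩) (disj3.2 ⟨uD, aD, hxD⟩)
    rw [disj3]
    simp only [Finset.mem_insert, Finset.mem_singleton]
    grind
  · have : PP H u v B c ⊆ D \ B := by
      intro z hz
      rw [mem_PP] at hz
      rw [Finset.mem_sdiff]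
      refine ⟨?_, hz.2.2⟩
      by_contra hzD
      have hza : z ≠ a := by
        rintro rfl
        have : c ∈ PP H u v B z := by
          rw [mem_PP, perm23]
          exact ⟨hz.1, fun h => hvA (h ▸ hc), hcB⟩
        exact Finset.disjoint_left.1 hd this hc
      refine h.no3 _ hz.1 _ hvab _ hD ?_ (disj3.2 ⟨uD, hcD, hzD⟩) (disj3.2 ⟨vD, aD, hbD⟩)
      rw [disj3]
      simp only [Finset.mem_insert, Finset.mem_singleton]
      grind
    have := Finset.card_le_card this
    omega

theorem Cfg.l2 {H u v A B} (h : Cfg H u v A B) {a : ℕ} (ha : a ∈ A)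
    (hp : (PP H u v B a).card = 3) (ht : tt H u v a = 1) (hbu : (lk H u a ∩ B).card = 2)
    (hbv : (lk H v a ∩ B).card = 3) (hd : Disjoint (PP H u v B a) A) :
    ∀ b ∈ A, b ≠ a → (lk H v b ∩ B).card ≤ 2 ∧ (PP H u v B b).card ≤ 2 := by
  obtain ⟨C, hC, D, hD, hCD, uC, aC, uD, aD⟩ := h.res u a
  have hsub := h.lk_sub hC hD hCD uC aC uD aD
  have hv : v ∈ C ∪ D := by
    unfold tt at ht
    split_ifs at ht with hT
    · rw [perm23] at hT
      exact hsub (mem_lk.2 hT)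
  rcases Finset.mem_union.1 hv with hv | hv
  · exact h.l2aux ha hp hbu ht hbv hd hC hD hCD uC aC uD aD hv
  · exact h.l2aux ha hp hbu ht hbv hd hD hC hCD.symm uD aD uC aC hv

theorem Cfg.count {H u v A B} (h : Cfg H u v A B) (a b c : ℕ) (hA : A = {a, b, c}) :
    (H.filter (fun T => u ∈ T ∧ v ∉ T ∧ Disjoint T B)).card ≤
      (PP H u v B a).card + (PP H u v B b \ {a}).card + (PP H u v B c \ {a, b}).card := by
  have key : H.filter (fun T => u ∈ T ∧ v ∉ T ∧ Disjoint T B) ⊆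
      ((PP H u v B a).image (fun z => ({u, a, z} : Finset ℕ)) ∪
      (PP H u v B b \ {a}).image (fun z => ({u, b, z} : Finset ℕ))) ∪
      (PP H u v B c \ {a, b}).image (fun z => ({u, c, z} : Finset ℕ)) := by
    intro T hT
    simp only [Finset.mem_filter] at hT
    obtain ⟨hTH, huT, hvT, hTB⟩ := hT
    have third : ∀ x ∈ A, x ∈ T → ∃ z ∈ PP H u v B x, T = {u, x, z} := by
      intro x hx hxT
      obtain ⟨z, hz⟩ := exists_third (h.h3 T hTH) huT hxT (fun h' => h.uA (h' ▸ hx))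
      have hzT : z ∈ T := by rw [hz]; simp
      refine ⟨z, mem_PP.2 ⟨hz ▸ hTH, fun h' => hvT (h' ▸ hzT), Finset.disjoint_left.1 hTB hzT⟩, hz⟩
    have hTA : ¬ Disjoint T A := fun hd => h.no3 _ hTH _ h.hA _ h.hB hd hTB h.dAB
    simp only [Finset.mem_union, Finset.mem_image, Finset.mem_sdiff, Finset.mem_insert,
      Finset.mem_singleton]
    by_cases haT : a ∈ T
    · obtain ⟨z, hz, e⟩ := third a (by simp [hA]) haT
      exact Or.inl (Or.inl ⟨z, hz, e.symm⟩)
    by_cases hbT : b ∈ T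
    · obtain ⟨z, hz, e⟩ := third b (by simp [hA]) hbT
      refine Or.inl (Or.inr ⟨z, ⟨hz, ?_⟩, e.symm⟩)
      rintro rfl
      exact haT (by rw [e]; simp)
    by_cases hcT : c ∈ T
    · obtain ⟨z, hz, e⟩ := third c (by simp [hA]) hcT
      refine Or.inr ⟨z, ⟨hz, ?_⟩, e.symm⟩
      rintro (rfl | rfl)
      · exact haT (by rw [e]; simp)
      · exact hbT (by rw [e]; simp)
    · exact absurd (by rw [disjoint_comm, hA, disj3]; exact ⟨haT, hbT, hcT⟩) hTA
  refine (Finset.card_le_card key).trans ((Finset.card_union_le _ _).trans ?_)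
  exact Nat.add_le_add ((Finset.card_union_le _ _).trans
    (Nat.add_le_add Finset.card_image_le Finset.card_image_le)) Finset.card_image_le

theorem Cfg.countAB {H u v A B} (h : Cfg H u v A B) (a b c : ℕ) (hA : A = {a, b, c}) :
    (H.filter (fun T => u ∈ T ∧ v ∉ T ∧ ¬ Disjoint T A ∧ ¬ Disjoint T B)).card ≤
      (lk H u a ∩ B).card + (lk H u b ∩ B).card + (lk H u c ∩ B).card := by
  have key : H.filter (fun T => u ∈ T ∧ v ∉ T ∧ ¬ Disjoint T A ∧ ¬ Disjoint T B) ⊆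
      ((lk H u a ∩ B).image (fun z => ({u, a, z} : Finset ℕ)) ∪
      (lk H u b ∩ B).image (fun z => ({u, b, z} : Finset ℕ))) ∪
      (lk H u c ∩ B).image (fun z => ({u, c, z} : Finset ℕ)) := by
    intro T hT
    simp only [Finset.mem_filter] at hT
    obtain ⟨hTH, huT, hvT, hTA, hTB⟩ := hT
    obtain ⟨x, hxT, hxA⟩ := Finset.not_disjoint_iff.1 hTA
    obtain ⟨y, hyT, hyB⟩ := Finset.not_disjoint_iff.1 hTB
    obtain ⟨z, hz⟩ := exists_third (h.h3 T hTH) huT hxT (fun h' => h.uA (h' ▸ hxA))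
    have hyz : y = z := by
      rw [hz] at hyT
      simp at hyT
      rcases hyT with rfl | rfl | rfl
      · exact absurd hyB h.uB
      · exact absurd hyB (Finset.disjoint_left.1 h.dAB hxA)
      · rfl
    subst hyz
    have hl : y ∈ lk H u x ∩ B := Finset.mem_inter.2 ⟨mem_lk.2 (hz ▸ hTH), hyB⟩
    simp only [Finset.mem_union, Finset.mem_image]
    rw [hA] at hxA
    simp only [Finset.mem_insert, Finset.mem_singleton] at hxA
    rcases hxA with rfl | rfl | rfl
    · exact Or.inl (Or.inl ⟨y, hl, hz.symm⟩)
    · exact Or.inl (Or.inr ⟨y, hl, hz.symm⟩)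
    · exact Or.inr ⟨y, hl, hz.symm⟩
  refine (Finset.card_le_card key).trans ((Finset.card_union_le _ _).trans ?_)
  exact Nat.add_le_add ((Finset.card_union_le _ _).trans
    (Nat.add_le_add Finset.card_image_le Finset.card_image_le)) Finset.card_image_le

theorem Cfg.countUV {H u v A B} (h : Cfg H u v A B) (a b c : ℕ) (hA : A = {a, b, c}) :
    (H.filter (fun T => u ∈ T ∧ v ∈ T ∧ ¬ Disjoint T A)).card ≤
      tt H u v a + tt H u v b + tt H u v c := by
  let S : ℕ → Finset (Finset ℕ) := fun x =>
    if ({u, v, x} : Finset ℕ) ∈ H then {({u, v, x} : Finset ℕ)} else ∅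
  have hS : ∀ x, (S x).card = tt H u v x := by
    intro x
    simp only [S, tt]
    split_ifs <;> rfl
  have key : H.filter (fun T => u ∈ T ∧ v ∈ T ∧ ¬ Disjoint T A) ⊆ (S a ∪ S b) ∪ S c := by
    intro T hT
    simp only [Finset.mem_filter] at hT
    obtain ⟨hTH, huT, hvT, hTA⟩ := hT
    obtain ⟨x, hxT, hxA⟩ := Finset.not_disjoint_iff.1 hTA
    obtain ⟨z, hz⟩ := exists_third (h.h3 T hTH) huT hvT h.uv
    have hxz : x = z := by
      rw [hz] at hxT
      simp at hxT
      rcases hxT with rfl | rfl | rfl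
      · exact absurd hxA h.uA
      · exact absurd hxA h.vA
      · rfl
    subst hxz
    have hl : T ∈ S x := by
      simp only [S]
      rw [if_pos (hz ▸ hTH)]
      simp [hz]
    simp only [Finset.mem_union]
    rw [hA] at hxA
    simp only [Finset.mem_insert, Finset.mem_singleton] at hxA
    rcases hxA with rfl | rfl | rfl
    · exact Or.inl (Or.inl hl)
    · exact Or.inl (Or.inr hl)
    · exact Or.inr hl
  refine (Finset.card_le_card key).trans ((Finset.card_union_le _ _).trans ?_)
  rw [← hS, ← hS, ← hS]
  exact Nat.add_le_add_right (Finset.card_union_le _ _) _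

theorem Cfg.sP {H u v A B} (h : Cfg H u v A B) {a b : ℕ} (ha : a ∈ A) (hb : b ∈ A)
    (hab : a ∈ PP H u v B b) : b ∈ PP H u v B a := by
  rw [mem_PP] at hab ⊢
  rw [perm23]
  exact ⟨hab.1, fun h' => h.vA (h' ▸ hb), Finset.disjoint_left.1 h.dAB hb⟩

theorem Cfg.sd {H u v A B} (h : Cfg H u v A B) :
    Sd A (PP H u v B) (PP H v u B) (tt H u v) (fun a => (lk H u a ∩ B).card)
      (fun a => (lk H v a ∩ B).card)
      (H.filter (fun T => u ∈ T ∧ v ∉ T ∧ Disjoint T B)).card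
      (H.filter (fun T => v ∈ T ∧ u ∉ T ∧ Disjoint T B)).card where
  cross := by
    intro a ha b hb hab z hz w hw
    rw [mem_PP] at hz hw
    by_contra hcon
    push Not at hcon
    have huA := h.uA
    have hvA := h.vA
    have huv := h.uv
    refine h.no3 _ hz.1 _ hw.1 _ h.hB ?_
      (disj3.2 ⟨h.uB, Finset.disjoint_left.1 h.dAB ha, hz.2.2⟩)
      (disj3.2 ⟨h.vB, Finset.disjoint_left.1 h.dAB hb, hw.2.2⟩)
    rw [disj3]
    simp only [Finset.mem_insert, Finset.mem_singleton]
    grind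
  sP := fun a ha b hb => h.sP ha hb
  sQ := fun a ha b hb => h.swap.sP ha hb
  iP := fun a ha hm => (h.ne (mem_PP.1 hm).1).2.2 rfl
  iQ := fun a ha hm => (h.ne (mem_PP.1 hm).1).2.2 rfl
  t1 := fun a _ => by unfold tt; split_ifs <;> omega
  bu3 := fun a _ => (Finset.card_le_card Finset.inter_subset_right).trans (h.h3 B h.hB).le
  bv3 := fun a _ => (Finset.card_le_card Finset.inter_subset_right).trans (h.h3 B h.hB).le
  dP := fun a _ => by
    show _ + _ + (lk H u a ∩ B).card ≤ 6
    rw [h.split a]; exact h.codeg a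
  dQ := fun a _ => by
    show _ + _ + (lk H v a ∩ B).card ≤ 6
    rw [tt_comm, h.swap.split a]; exact h.swap.codeg a
  lP := fun a ha h4 => h.l1 ha h4
  lQ := fun a ha h4 => by
    obtain ⟨h1, h2, h3, h5⟩ := h.swap.l1 ha h4
    rw [tt_comm] at h2
    exact ⟨h1, h2, h5, h3⟩
  cP := fun a b c _ _ _ hA => h.count a b c hA
  cQ := fun a b c _ _ _ hA => h.swap.count a b c hA
  vP := fun a ha h1 h2 h3 h4 h5 => h.l2 ha h1 h2 h3 h4 h5
  vQ := fun a ha h1 h2 h3 h4 h5 => h.swap.l2 ha h1 (by rw [tt_comm]; exact h2) h3 h4 h5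

theorem Cfg.side {H u v A B} (h : Cfg H u v A B) :
    2 * (H.filter (fun T => u ∈ T ∧ v ∈ T ∧ ¬ Disjoint T A)).card +
    2 * ((H.filter (fun T => u ∈ T ∧ v ∉ T ∧ Disjoint T B)).card +
      (H.filter (fun T => v ∈ T ∧ u ∉ T ∧ Disjoint T B)).card) +
    (H.filter (fun T => u ∈ T ∧ v ∉ T ∧ ¬ Disjoint T A ∧ ¬ Disjoint T B)).card +
    (H.filter (fun T => v ∈ T ∧ u ∉ T ∧ ¬ Disjoint T A ∧ ¬ Disjoint T B)).card ≤ 36 := by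
  obtain ⟨a, b, c, hab, hac, hbc, hA⟩ := Finset.card_eq_three.1 (h.h3 A h.hA)
  have h1 := h.sd.main hab hac hbc hA
  have h2 := h.countUV a b c hA
  have h3 := h.countAB a b c hA
  have h4 := h.swap.countAB a b c hA
  omega

theorem Cfg.total {H u v A B} (h : Cfg H u v A B) :
    (H.filter fun T => (T ∩ {u, v}).Nonempty).card ≤ 36 := by
  have h1 := h.side
  have h2 := h.swapAB.side
  have e1 : ∀ x y : ℕ, H.filter (fun T => x ∈ T ∧ y ∉ T ∧ ¬ Disjoint T B ∧ ¬ Disjoint T A) =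
      H.filter (fun T => x ∈ T ∧ y ∉ T ∧ ¬ Disjoint T A ∧ ¬ Disjoint T B) := by
    intro x y
    apply Finset.filter_congr
    intro T _
    tauto
  rw [e1, e1] at h2
  have key : (H.filter fun T => (T ∩ {u, v}).Nonempty) ⊆
      (H.filter (fun T => u ∈ T ∧ v ∈ T ∧ ¬ Disjoint T A) ∪
      H.filter (fun T => u ∈ T ∧ v ∈ T ∧ ¬ Disjoint T B)) ∪
      ((H.filter (fun T => u ∈ T ∧ v ∉ T ∧ Disjoint T B) ∪
      H.filter (fun T => v ∈ T ∧ u ∉ T ∧ Disjoint T B)) ∪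
      (H.filter (fun T => u ∈ T ∧ v ∉ T ∧ Disjoint T A) ∪
      H.filter (fun T => v ∈ T ∧ u ∉ T ∧ Disjoint T A))) ∪
      (H.filter (fun T => u ∈ T ∧ v ∉ T ∧ ¬ Disjoint T A ∧ ¬ Disjoint T B) ∪
      H.filter (fun T => v ∈ T ∧ u ∉ T ∧ ¬ Disjoint T A ∧ ¬ Disjoint T B)) := by
    intro T hT
    simp only [Finset.mem_filter] at hT
    obtain ⟨hTH, x, hx⟩ := hT
    have hx' : u ∈ T ∨ v ∈ T := by
      simp at hx
      rcases hx with ⟨hx, rfl | rfl⟩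
      · exact Or.inl hx
      · exact Or.inr hx
    have hno : ¬ (Disjoint T A ∧ Disjoint T B) := fun hd =>
      h.no3 _ hTH _ h.hA _ h.hB hd.1 hd.2 h.dAB
    simp only [Finset.mem_union, Finset.mem_filter, hTH, true_and]
    clear hx h1 h2 e1
    by_cases k1 : u ∈ T <;> by_cases k2 : v ∈ T <;> by_cases k3 : Disjoint T A <;>
      by_cases k4 : Disjoint T B <;>
      simp only [k1, k2, k3, k4, and_self, or_self, not_true, not_false_iff, and_true, true_and,
        and_false, false_and, or_true, true_or, or_false, false_or] at hx' hno ⊢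
  refine (Finset.card_le_card key).trans ?_
  refine (Finset.card_union_le _ _).trans ?_
  have c1 := Finset.card_union_le (H.filter (fun T => u ∈ T ∧ v ∉ T ∧ ¬ Disjoint T A ∧ ¬ Disjoint T B))
      (H.filter (fun T => v ∈ T ∧ u ∉ T ∧ ¬ Disjoint T A ∧ ¬ Disjoint T B))
  have c2 := Finset.card_union_le (H.filter (fun T => u ∈ T ∧ v ∉ T ∧ Disjoint T B))
      (H.filter (fun T => v ∈ T ∧ u ∉ T ∧ Disjoint T B))
  have c3 := Finset.card_union_le (H.filter (fun T => u ∈ T ∧ v ∉ T ∧ Disjoint T A))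
      (H.filter (fun T => v ∈ T ∧ u ∉ T ∧ Disjoint T A))
  have c4 := Finset.card_union_le (H.filter (fun T => u ∈ T ∧ v ∈ T ∧ ¬ Disjoint T A))
      (H.filter (fun T => u ∈ T ∧ v ∈ T ∧ ¬ Disjoint T B))
  refine (Nat.add_le_add ((Finset.card_union_le _ _).trans (Nat.add_le_add c4
    ((Finset.card_union_le _ _).trans (Nat.add_le_add c2 c3)))) c1).trans ?_
  omega

theorem matching_bdd (H : Finset (Finset ℕ)) :
    BddAbove {m | ∃ M : Finset (Finset ℕ), M ⊆ H ∧ M.card = m ∧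
    (M : Set (Finset ℕ)).PairwiseDisjoint id} := by
  refine ⟨H.card, ?_⟩
  rintro m ⟨M, hM, rfl, _⟩
  exact Finset.card_le_card hM

theorem matching_two {H : Finset (Finset ℕ)} (h : matchingNumber H = 2) :
    ∃ C ∈ H, ∃ D ∈ H, Disjoint C D := by
  have hne : {m | ∃ M : Finset (Finset ℕ), M ⊆ H ∧ M.card = m ∧
    (M : Set (Finset ℕ)).PairwiseDisjoint id}.Nonempty := ⟨0, ∅, by simp, by simp, by simp⟩
  have := Nat.sSup_mem hne (matching_bdd H)
  unfold matchingNumber at h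
  rw [h] at this
  obtain ⟨M, hM, hc, hd⟩ := this
  obtain ⟨C, D, hCD, rfl⟩ := Finset.card_eq_two.1 hc
  exact ⟨C, hM (by simp), D, hM (by simp), hd (by simp) (by simp) hCD⟩

theorem matching_no3 {H : Finset (Finset ℕ)} (h : matchingNumber H = 2)
    (h3 : ∀ T ∈ H, T.card = 3) :
    ∀ R ∈ H, ∀ S ∈ H, ∀ T ∈ H, Disjoint R S → Disjoint R T → Disjoint S T → False := by
  intro R hR S hS T hT h1 h2 h4
  have ne : ∀ X ∈ H, ∀ Y : Finset ℕ, Disjoint X Y → X ≠ Y := by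
    rintro X hX Y hd rfl
    have := h3 X hX
    rw [Finset.disjoint_self_iff_empty] at hd
    simp [hd] at this
  have : 3 ≤ matchingNumber H := by
    refine le_csSup (matching_bdd H) ⟨{R, S, T}, ?_, ?_, ?_⟩
    · intro x hx
      simp at hx
      rcases hx with rfl | rfl | rfl <;> assumption
    · exact Finset.card_eq_three.2 ⟨R, S, T, ne R hR S h1, ne R hR T h2, ne S hS T h4, rfl⟩
    · intro x hx y hy hxy
      simp at hx hy
      simp only [Function.onFun, id]
      rcases hx with rfl | rfl | rfl <;> rcases hy with rfl | rfl | rfl <;>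
        first | exact absurd rfl hxy | assumption | (apply Disjoint.symm; assumption)
  omega

/-- In a 2-resilient 3-graph with matching number 2, at most 36
edges meet any given pair of vertices `{u, v}`. -/
theorem stmt10 (n : ℕ) (H : Finset (Finset ℕ))
    (hH : H ⊆ (Finset.range n).powersetCard 3)
    (hres : Resilient 2 H) (hν : matchingNumber H = 2)
    (u v : ℕ) (hu : u ∈ Finset.range n) (hv : v ∈ Finset.range n) :
    (H.filter fun T => (T ∩ {u, v}).Nonempty).card ≤ 36 := by
  have h3 : ∀ T ∈ H, T.card = 3 := fun T hT => (Finset.mem_powersetCard.1 (hH hT)).2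
  have no3 := matching_no3 hν h3
  have res : ∀ x y, ∃ C ∈ H, ∃ D ∈ H, Disjoint C D ∧ x ∉ C ∧ y ∉ C ∧ x ∉ D ∧ y ∉ D := by
    intro x y
    obtain ⟨C, hC, D, hD, hCD⟩ := matching_two ((hres {x, y} Finset.card_le_two).trans hν)
    simp only [Finset.mem_filter, Finset.disjoint_insert_right, Finset.disjoint_singleton_right]
      at hC hD
    exact ⟨C, hC.1, D, hD.1, hCD, hC.2.1, hC.2.2, hD.2.1, hD.2.2⟩
  have key : ∀ w, u ≠ w → (H.filter fun T => (T ∩ {u, w}).Nonempty).card ≤ 36 := by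
    intro w huw
    obtain ⟨A, hA, B, hB, hAB, uA, vA, uB, vB⟩ := res u w
    exact Cfg.total ⟨h3, no3, res, hA, hB, hAB, uA, uB, vA, vB, huw⟩
  by_cases huv : u = v
  · refine le_trans (Finset.card_le_card ?_) (key (u + 1) (by omega))
    intro T hT
    simp only [Finset.mem_filter] at hT ⊢
    refine ⟨hT.1, hT.2.mono ?_⟩
    intro x hx
    simp at hx ⊢
    exact ⟨hx.1, Or.inl (by omega)⟩
  · exact key v huv
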